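/- For every s₀ ∈ ℕ there exists a constant C > 0, depending only on s₀, such that for every interval (a,b) with Δt = b − a, every r ∈ ℕ with r ≥ 1, every function u : [a,b] → ℝ of class C^{s₀+1}, and every integer s with 0 ≤ s ≤ min(r, s₀), the projection error satisfies ‖u − Π^r u‖²_{L²(a,b)} ≤ C (Δt/2)^{2(s+1)} (1/r²) ((r−s)!/(r+s)!) ‖u^{(s+1)}‖²_{L²(a,b)}, where u^{(s+1)} is the (s+1)-st derivative of u. -/

import Mathlib

open MeasureTheory Set intervalIntegral

namespace RadauProj
open Polynomial

lemma polyInt (a b : ℝ) (f : ℝ[X]) : IntervalIntegrable (fun t => f.eval t) volume a b :=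
  f.continuous.intervalIntegrable a b

/-- integral of a polynomial as a linear functional -/
noncomputable def pint (a b : ℝ) : ℝ[X] →ₗ[ℝ] ℝ where
  toFun f := ∫ t in a..b, f.eval t
  map_add' f g := by
    simp only [eval_add]
    exact integral_add (polyInt a b f) (polyInt a b g)
  map_smul' c f := by
    simp only [eval_smul, smul_eq_mul, RingHom.id_apply]
    exact integral_const_mul c _

lemma pint_apply (a b : ℝ) (f : ℝ[X]) : pint a b f = ∫ t in a..b, f.eval t := rfl

lemma pint_derivative (a b : ℝ) (f : ℝ[X]) : pint a b (derivative f) = f.eval b - f.eval a := by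
  rw [pint_apply]
  exact integral_eq_sub_of_hasDerivAt (fun t _ => f.hasDerivAt t) (polyInt a b _)

/-- weighted form -/
noncomputable def B (a b : ℝ) (g h : ℝ[X]) : ℝ := pint a b ((C b - X) * g * h)

lemma B_comm (a b : ℝ) (g h : ℝ[X]) : B a b g h = B a b h g := by
  unfold B; congr 1; ring

lemma B_add_left (a b : ℝ) (g g' h : ℝ[X]) : B a b (g + g') h = B a b g h + B a b g' h := by
  unfold B; rw [← map_add]; congr 1; ring

lemma B_sub_left (a b : ℝ) (g g' h : ℝ[X]) : B a b (g - g') h = B a b g h - B a b g' h := by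
  unfold B; rw [← map_sub]; congr 1; ring

lemma B_smul_left (a b c : ℝ) (g h : ℝ[X]) : B a b (C c * g) h = c * B a b g h := by
  unfold B
  rw [← smul_eq_mul (a := c), ← map_smul]; congr 1; rw [smul_eq_C_mul]; ring

lemma B_add_right (a b : ℝ) (g g' h : ℝ[X]) : B a b h (g + g') = B a b h g + B a b h g' := by
  rw [B_comm, B_add_left, B_comm a b g, B_comm a b g']

lemma B_sub_right (a b : ℝ) (g g' h : ℝ[X]) : B a b h (g - g') = B a b h g - B a b h g' := by
  rw [B_comm, B_sub_left, B_comm a b g, B_comm a b g']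

lemma B_smul_right (a b c : ℝ) (g h : ℝ[X]) : B a b h (C c * g) = c * B a b h g := by
  rw [B_comm, B_smul_left, B_comm a b g]

lemma B_self_nonneg {a b : ℝ} (hab : a < b) (g : ℝ[X]) : 0 ≤ B a b g g := by
  unfold B
  rw [pint_apply]
  apply integral_nonneg hab.le
  intro t ht
  simp only [eval_mul, eval_sub, eval_C, eval_X]
  rw [mul_assoc]
  exact mul_nonneg (by linarith [ht.2]) (mul_self_nonneg _)

lemma B_self_eq_zero {a b : ℝ} (hab : a < b) {g : ℝ[X]} (h : B a b g g = 0) : g = 0 := by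
  by_contra hg
  have hne : ((C b - X) * g) ≠ 0 := by
    apply mul_ne_zero _ hg
    intro h0
    have := congrArg (fun p => p.coeff 1) h0
    simp [coeff_X] at this
  obtain ⟨c, hc, hc0⟩ : ∃ c ∈ Icc a b, ((C b - X) * g).eval c ≠ 0 := by
    by_contra hcon
    push Not at hcon
    apply hne
    apply eq_zero_of_infinite_isRoot
    exact (Icc_infinite hab).mono (fun x hx => hcon x hx)
  have : 0 < ∫ t in a..b, ((C b - X) * g * g).eval t := by
    apply integral_pos hab (Polynomial.continuous _).continuousOn
    · intro t ht
      simp only [eval_mul, eval_sub, eval_C, eval_X]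
      rw [mul_assoc]
      exact mul_nonneg (by linarith [ht.2]) (mul_self_nonneg _)
    · refine ⟨c, hc, ?_⟩
      simp only [eval_mul, eval_sub, eval_C, eval_X] at hc0 ⊢
      rw [mul_assoc]
      have h1 : b - c ≠ 0 := left_ne_zero_of_mul hc0
      have h2 : g.eval c ≠ 0 := right_ne_zero_of_mul hc0
      have h3 : 0 < b - c := lt_of_le_of_ne (by linarith [hc.2]) h1.symm
      exact mul_pos h3 (mul_self_pos.2 h2)
  unfold B at h
  rw [pint_apply] at h
  linarith

/-- Riesz representation on polynomials of degree `< n`. -/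
lemma riesz {a b : ℝ} (hab : a < b) (n : ℕ) : ∀ ℓ : ℝ[X] →ₗ[ℝ] ℝ, ∃ h : ℝ[X], h.degree < (n : WithBot ℕ) ∧
    ∀ q : ℝ[X], q.degree < (n : WithBot ℕ) → B a b h q = ℓ q := by
  induction n with
  | zero =>
    intro ℓ
    refine ⟨0, by simp, fun q hq => ?_⟩
    have : q = 0 := by
      rw [← degree_eq_bot]
      exact Nat.WithBot.lt_zero_iff.1 hq
    subst this
    simp [B]
  | succ n ih =>
    intro ℓ
    let ℓ' : ℝ[X] →ₗ[ℝ] ℝ :=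
      { toFun := fun q => B a b (X ^ n) q
        map_add' := fun x y => B_add_right a b x y _
        map_smul' := fun c x => by
          rw [smul_eq_C_mul, B_smul_right]; rfl }
    obtain ⟨p, hp, hp'⟩ := ih ℓ'
    obtain ⟨h, hh, hh'⟩ := ih ℓ
    set φ : ℝ[X] := X ^ n - p with hφ
    have hφo : ∀ q : ℝ[X], q.degree < (n : WithBot ℕ) → B a b φ q = 0 := by
      intro q hq
      rw [hφ, B_sub_left, hp' q hq]
      exact sub_self _
    have hφd : φ.degree = n := by
      rw [hφ, degree_sub_eq_left_of_degree_lt, degree_X_pow]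
      rwa [degree_X_pow]
    have hφ0 : φ ≠ 0 := by
      intro h0; rw [h0] at hφd; simp at hφd
    have hB : B a b φ φ ≠ 0 := fun h0 => hφ0 (B_self_eq_zero hab h0)
    have hcn : φ.coeff n = 1 := by
      rw [hφ, coeff_sub, coeff_X_pow_self, coeff_eq_zero_of_degree_lt hp]; simp
    refine ⟨h + C ((ℓ φ) / B a b φ φ) * φ, ?_, ?_⟩
    · refine (degree_add_le _ _).trans_lt (max_lt ?_ ?_)
      · exact hh.trans (by exact_mod_cast Nat.lt_succ_self n)
      · refine (degree_mul_le _ _).trans_lt ?_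
        refine (add_le_add_left degree_C_le _).trans_lt ?_
        rw [hφd, zero_add]; exact_mod_cast Nat.lt_succ_self n
    · intro q hq
      set q1 := q - C (q.coeff n) * φ with hq1
      have hq1d : q1.degree < (n : WithBot ℕ) := by
        rw [degree_lt_iff_coeff_zero]
        intro m hm
        rcases hm.eq_or_lt with rfl | hlt
        · rw [hq1, coeff_sub, coeff_C_mul, hcn]; ring
        · rw [hq1, coeff_sub, coeff_C_mul, coeff_eq_zero_of_degree_lt (p := φ), coeff_eq_zero_of_degree_lt (p := q)]
          · ring
          · exact hq.trans_le (by exact_mod_cast hlt)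
          · rw [hφd]; exact_mod_cast hlt
      have hqe : q = q1 + C (q.coeff n) * φ := by rw [hq1]; ring
      have e1 : B a b h q1 = ℓ q1 := hh' q1 hq1d
      have e2 := hφo q1 hq1d
      have e3 : B a b h φ = 0 := by rw [B_comm]; exact hφo h hh
      have e4 : ℓ (C (q.coeff n) * φ) = q.coeff n * ℓ φ := by
        rw [← smul_eq_C_mul, map_smul, smul_eq_mul]
      rw [hqe]
      generalize q.coeff n = c at *
      rw [map_add, e4, B_add_left, B_add_right, B_smul_left, B_add_right, B_smul_right, B_smul_right, e1, e2, e3]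
      field_simp
      ring

/-- The differential operator. -/
noncomputable def T (a b : ℝ) (g : ℝ[X]) : ℝ[X] :=
  -derivative ((X - C a) * derivative ((C b - X) * g))

lemma B_T (a b : ℝ) (g h : ℝ[X]) :
    B a b (T a b g) h = pint a b ((X - C a) * derivative ((C b - X) * g) * derivative ((C b - X) * h)) := by
  have h1 := pint_derivative a b ((X - C a) * derivative ((C b - X) * g) * ((C b - X) * h))
  rw [derivative_mul (f := (X - C a) * derivative ((C b - X) * g)), map_add] at h1
  simp only [eval_mul, eval_sub, eval_X, eval_C, sub_self, zero_mul, mul_zero] at h1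
  unfold B T
  have h2 : (C b - X) * -derivative ((X - C a) * derivative ((C b - X) * g)) * h
    = - (derivative ((X - C a) * derivative ((C b - X) * g)) * ((C b - X) * h)) := by ring
  rw [h2, map_neg]
  linarith

lemma B_T_comm (a b : ℝ) (g h : ℝ[X]) : B a b (T a b g) h = B a b g (T a b h) := by
  rw [B_comm a b g, B_T, B_T]; congr 1; ring

lemma T_add (a b : ℝ) (g h : ℝ[X]) : T a b (g + h) = T a b g + T a b h := by
  unfold T; rw [mul_add, derivative_add, mul_add, derivative_add]; ring

lemma T_smul (a b c : ℝ) (g : ℝ[X]) : T a b (C c * g) = C c * T a b g := by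
  unfold T
  rw [mul_left_comm, derivative_C_mul, mul_left_comm, derivative_C_mul]; ring

lemma B_T_self_nonneg {a b : ℝ} (hab : a < b) (g : ℝ[X]) : 0 ≤ B a b (T a b g) g := by
  rw [B_T, pint_apply]
  apply integral_nonneg hab.le
  intro t ht
  rw [mul_assoc, eval_mul, eval_mul]
  exact mul_nonneg (by simp; linarith [ht.1]) (mul_self_nonneg _)

lemma T_coeff (a b : ℝ) (g : ℝ[X]) (m : ℕ) (hg : ∀ k, m < k → g.coeff k = 0) :
    (T a b g).coeff m = (m + 1) ^ 2 * g.coeff m := by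
  have h1 := hg (m + 1) (by omega)
  have h2 := hg (m + 2) (by omega)
  unfold T
  simp only [coeff_neg, coeff_derivative, sub_mul, coeff_sub, coeff_X_mul, coeff_C_mul, h1, h2]
  push_cast
  ring

lemma T_degree (a b : ℝ) (g : ℝ[X]) (n : ℕ) (hg : g.degree < (n : WithBot ℕ)) :
    (T a b g).degree < (n : WithBot ℕ) := by
  rw [degree_lt_iff_coeff_zero] at hg ⊢
  intro m hm
  rw [T_coeff a b g m (fun k hk => hg k (by omega)), hg m hm, mul_zero]

lemma coercive {a b : ℝ} (hab : a < b) (r N : ℕ) (hrN : r ≤ N) : ∀ g : ℝ[X], g.degree < (N : WithBot ℕ) →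
    (∀ q : ℝ[X], q.degree < (r : WithBot ℕ) → B a b g q = 0) →
    ((r : ℝ) + 1) ^ 2 * B a b g g ≤ B a b (T a b g) g := by
  induction N, hrN using Nat.le_induction with
  | base =>
    intro g hg ho
    rw [ho g hg, mul_zero]
    exact B_T_self_nonneg hab g
  | succ N hrN ih =>
    intro g hg ho
    let ℓ' : ℝ[X] →ₗ[ℝ] ℝ :=
      { toFun := fun q => B a b (X ^ N) q
        map_add' := fun x y => B_add_right a b x y _
        map_smul' := fun c x => by
          rw [smul_eq_C_mul, B_smul_right]; rfl }
    obtain ⟨p, hp, hp'⟩ := riesz hab N ℓ'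
    set φ : ℝ[X] := X ^ N - p with hφ
    have hφo : ∀ q : ℝ[X], q.degree < (N : WithBot ℕ) → B a b φ q = 0 := by
      intro q hq
      rw [hφ, B_sub_left, hp' q hq]
      exact sub_self _
    have hcn : φ.coeff N = 1 := by
      rw [hφ, coeff_sub, coeff_X_pow_self, coeff_eq_zero_of_degree_lt hp]; simp
    have hcm : ∀ m, N < m → φ.coeff m = 0 := by
      intro m hm
      rw [hφ, coeff_sub, coeff_X_pow, if_neg hm.ne', coeff_eq_zero_of_degree_lt (hp.trans (by exact_mod_cast hm))]
      simp
    have hTφ : T a b φ = C (((N : ℝ) + 1) ^ 2) * φ := by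
      rw [← sub_eq_zero]
      set d := T a b φ - C (((N : ℝ) + 1) ^ 2) * φ with hd
      have hdd : d.degree < (N : WithBot ℕ) := by
        rw [degree_lt_iff_coeff_zero]
        intro m hm
        rw [hd, coeff_sub, coeff_C_mul, T_coeff a b φ m (fun k hk => hcm k (by omega))]
        rcases hm.eq_or_lt with rfl | hlt
        · ring
        · rw [hcm m hlt]; ring
      apply B_self_eq_zero hab
      conv_lhs => arg 3; rw [hd]
      rw [B_sub_left, B_smul_left, B_T_comm, hφo d hdd, hφo _ (T_degree a b d N hdd)]
      ring
    set g1 := g - C (g.coeff N) * φ with hg1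
    have hg1d : g1.degree < (N : WithBot ℕ) := by
      rw [degree_lt_iff_coeff_zero]
      intro m hm
      rcases hm.eq_or_lt with rfl | hlt
      · rw [hg1, coeff_sub, coeff_C_mul, hcn]; ring
      · rw [hg1, coeff_sub, coeff_C_mul, hcm m hlt, coeff_eq_zero_of_degree_lt (p := g)]
        · ring
        · exact hg.trans_le (by exact_mod_cast hlt)
    have hge : g = g1 + C (g.coeff N) * φ := by rw [hg1]; ring
    have hg1o : ∀ q : ℝ[X], q.degree < (r : WithBot ℕ) → B a b g1 q = 0 := by
      intro q hq
      rw [hg1, B_sub_left, B_smul_left, ho q hq, hφo q (hq.trans_le (by exact_mod_cast hrN))]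
      ring
    have key := ih g1 hg1d hg1o
    have e2 := hφo g1 hg1d
    have e3 : B a b g1 φ = 0 := by rw [B_comm]; exact e2
    have e4 : B a b (T a b g1) φ = 0 := by rw [B_comm]; exact hφo _ (T_degree a b g1 N hg1d)
    have e5 := B_self_nonneg hab φ
    rw [hge]
    generalize g.coeff N = c at *
    simp only [T_add, T_smul, hTφ, B_add_left, B_add_right, B_smul_left, B_smul_right, e2, e3, e4]
    have h6 : ((r : ℝ) + 1) ^ 2 ≤ ((N : ℝ) + 1) ^ 2 := by
      have : (r : ℝ) ≤ N := by exact_mod_cast hrN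
      gcongr
    have h7 : 0 ≤ c ^ 2 * B a b φ φ := by positivity
    nlinarith [mul_le_mul_of_nonneg_right h6 h7]

/-- existence of the projection, in the form `u b + (b - X) h`. -/
lemma exists_proj {a b : ℝ} (hab : a < b) (r : ℕ) (u : ℝ → ℝ) (hu : ContinuousOn u (Icc a b)) :
    ∃ h : ℝ[X], h.degree < (r : WithBot ℕ) ∧ ∀ q : ℝ[X], q.degree < (r : WithBot ℕ) →
      ∫ t in a..b, (u t - (C (u b) + (C b - X) * h).eval t) * q.eval t = 0 := by
  have hi : ∀ q : ℝ[X], IntervalIntegrable (fun t => (u t - u b) * q.eval t) volume a b := by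
    intro q
    apply ContinuousOn.intervalIntegrable
    rw [uIcc_of_le hab.le]
    exact (hu.sub continuousOn_const).mul q.continuous.continuousOn
  let ℓ : ℝ[X] →ₗ[ℝ] ℝ :=
    { toFun := fun q => ∫ t in a..b, (u t - u b) * q.eval t
      map_add' := fun x y => by
        rw [← integral_add (hi x) (hi y)]
        congr 1; ext t; rw [eval_add]; ring
      map_smul' := fun c x => by
        rw [RingHom.id_apply, smul_eq_mul, ← intervalIntegral.integral_const_mul]
        congr 1; ext t; rw [eval_smul, smul_eq_mul]; ring }
  obtain ⟨h, hd, hh⟩ := riesz hab r ℓ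
  refine ⟨h, hd, fun q hq => ?_⟩
  have h1 := hh q hq
  have h2 : ∫ t in a..b, (u t - (C (u b) + (C b - X) * h).eval t) * q.eval t
      = (∫ t in a..b, (u t - u b) * q.eval t) - ∫ t in a..b, ((C b - X) * h * q).eval t := by
    rw [← integral_sub (hi q) (polyInt a b _)]
    congr 1; ext t
    simp only [eval_add, eval_mul, eval_sub, eval_C, eval_X]; ring
  rw [h2, sub_eq_zero]
  exact h1.symm

/-- The estimate for polynomials. -/
lemma poly_est {a b : ℝ} (hab : a < b) (r : ℕ) (F h : ℝ[X]) 
    (hd : h.degree < (r : WithBot ℕ)) (ho : ∀ q : ℝ[X], q.degree < (r : WithBot ℕ) →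
      ∫ t in a..b, (F.eval t - (C (F.eval b) + (C b - X) * h).eval t) * q.eval t = 0) :
    ((r : ℝ) + 1) ^ 2 * ∫ t in a..b, (F.eval t - (C (F.eval b) + (C b - X) * h).eval t) ^ 2
      ≤ (b - a) ^ 2 * ∫ t in a..b, (derivative F).eval t ^ 2 := by
  obtain ⟨g, hg⟩ : ∃ g, F - C (F.eval b) = (C b - X) * g := by
    obtain ⟨k, hk⟩ := X_sub_C_dvd_sub_C_eval (p := F) (a := b)
    exact ⟨-k, by rw [hk]; ring⟩
  set e := g - h with he
  have hgeh : g = h + e := by rw [he]; ring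
  have hFe : ∀ t, F.eval t - (C (F.eval b) + (C b - X) * h).eval t = ((C b - X) * e).eval t := by
    intro t
    rw [he, mul_sub, ← hg]
    simp only [eval_add, eval_sub]; ring
  have heo : ∀ q : ℝ[X], q.degree < (r : WithBot ℕ) → B a b e q = 0 := by
    intro q hq
    rw [← ho q hq, B, pint_apply]
    congr 1; ext t
    rw [hFe, eval_mul (q := q)]
  have hco : ((r : ℝ) + 1) ^ 2 * B a b e e ≤ B a b (T a b e) e := by
    have hN : e.degree < ((max r (e.natDegree + 1) : ℕ) : WithBot ℕ) := by
      refine degree_le_natDegree.trans_lt ?_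
      exact_mod_cast (Nat.lt_succ_self _).trans_le (le_max_right _ _)
    exact coercive hab r _ (le_max_left _ _) e hN heo
  have h1 : B a b (T a b g) g = B a b (T a b h) h + B a b (T a b e) e := by
    have c1 : B a b (T a b h) e = 0 := by rw [B_comm]; exact heo _ (T_degree a b h r hd)
    have c2 : B a b (T a b e) h = 0 := by rw [B_T_comm]; exact heo _ (T_degree a b h r hd)
    rw [hgeh, T_add, B_add_left, B_add_right, B_add_right, c1, c2]; ring
  have h2 := B_T_self_nonneg hab h
  have h3 : B a b (T a b g) g ≤ (b - a) * ∫ t in a..b, (derivative F).eval t ^ 2 := by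
    rw [B_T, ← hg, pint_apply, ← intervalIntegral.integral_const_mul]
    apply integral_mono_on hab.le (polyInt a b _)
    · exact (Continuous.intervalIntegrable (by fun_prop) a b)
    · intro t ht
      simp only [derivative_sub, derivative_C, sub_zero, eval_mul, eval_sub, eval_X, eval_C]
      nlinarith [sq_nonneg ((derivative F).eval t), ht.2, mul_nonneg (sub_nonneg.2 ht.2) (sq_nonneg ((derivative F).eval t))]
  have h4 : ∫ t in a..b, (F.eval t - (C (F.eval b) + (C b - X) * h).eval t) ^ 2 ≤ (b - a) * B a b e e := by
    simp only [hFe]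
    rw [B, pint_apply, ← intervalIntegral.integral_const_mul]
    apply integral_mono_on hab.le
    · exact (Continuous.intervalIntegrable (by fun_prop) a b)
    · exact (Continuous.intervalIntegrable (by fun_prop) a b)
    · intro t ht
      simp only [eval_mul, eval_sub, eval_X, eval_C]
      have : (b - a) * ((b - t) * eval t e * eval t e) - ((b - t) * eval t e) ^ 2
        = (t - a) * (b - t) * (eval t e) ^ 2 := by ring
      have h5 : 0 ≤ (t - a) * (b - t) * (eval t e) ^ 2 :=
        mul_nonneg (mul_nonneg (by linarith [ht.1]) (by linarith [ht.2])) (sq_nonneg _)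
      linarith
  have hba : 0 < b - a := by linarith
  calc _ ≤ ((r : ℝ) + 1) ^ 2 * ((b - a) * B a b e e) := by gcongr
    _ = (b - a) * (((r : ℝ) + 1) ^ 2 * B a b e e) := by ring
    _ ≤ (b - a) * ((b - a) * ∫ t in a..b, (derivative F).eval t ^ 2) := by
      apply mul_le_mul_of_nonneg_left _ hba.le; linarith
    _ = _ := by ring
end RadauProj

namespace RadauProj
open Polynomial

lemma antideriv (n : ℕ) (q : ℝ[X]) (hq : q.degree < (n : WithBot ℕ)) :
    ∃ Q : ℝ[X], derivative Q = q ∧ Q.natDegree ≤ n := by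
  refine ⟨∑ i ∈ Finset.range n, C (q.coeff i / (i + 1)) * X ^ (i + 1), ?_, ?_⟩
  · have h1 : q = ∑ i ∈ Finset.range n, C (q.coeff i) * X ^ i := by
      ext m
      simp only [finsetSum_coeff, coeff_C_mul_X_pow, Finset.sum_ite_eq, Finset.mem_range]
      split_ifs with h
      · rfl
      · exact coeff_eq_zero_of_degree_lt (hq.trans_le (by exact_mod_cast not_lt.1 h))
    conv_rhs => rw [h1]
    rw [derivative_sum]
    apply Finset.sum_congr rfl
    intro i _
    rw [derivative_C_mul_X_pow]
    have : ((i : ℝ) + 1) ≠ 0 := by positivity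
    push_cast
    rw [div_mul_cancel₀ _ this]
  · apply natDegree_sum_le_of_forall_le
    intro i hi
    refine (natDegree_C_mul_X_pow_le _ _).trans ?_
    have := Finset.mem_range.1 hi
    omega

set_option maxHeartbeats 2000000 in
/-- the first order estimate -/
lemma main_est {a b : ℝ} (hab : a < b) (r : ℕ) (u v : ℝ → ℝ)
    (hu : ∀ t ∈ Icc a b, HasDerivWithinAt u (v t) (Icc a b) t) (hv : ContinuousOn v (Icc a b))
    (p : ℝ[X]) (hp : p.natDegree ≤ r) (hpb : p.eval b = u b)
    (ho : ∀ q : ℝ[X], q.degree < (r : WithBot ℕ) → ∫ t in a..b, (u t - p.eval t) * q.eval t = 0) :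
    ∫ t in a..b, (u t - p.eval t) ^ 2 ≤ 6 * (b - a) ^ 2 / ((r : ℝ) + 1) ^ 2 * ∫ t in a..b, v t ^ 2 := by
  have hba : 0 < b - a := by linarith
  have huc : ContinuousOn u (Icc a b) := fun t ht => (hu t ht).continuousWithinAt
  have hII : ∀ f : ℝ → ℝ, ContinuousOn f (Icc a b) → IntervalIntegrable f volume a b := by
    intro f hf
    apply ContinuousOn.intervalIntegrable
    rwa [uIcc_of_le hab.le]
  have hpc : ∀ q : ℝ[X], ContinuousOn (fun t => q.eval t) (Icc a b) := fun q => q.continuous.continuousOn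
  have key : ∀ ε > 0, ∫ t in a..b, (u t - p.eval t) ^ 2 ≤
      6 * (b - a) ^ 2 / ((r : ℝ) + 1) ^ 2 * (∫ t in a..b, v t ^ 2) + ε ^ 2 * (12 * (b - a) ^ 3) := by
    intro ε hε
    obtain ⟨Q, hQ⟩ := exists_polynomial_near_of_continuousOn a b v hv ε hε
    obtain ⟨F0, hF0, -⟩ := antideriv (Q.natDegree + 1) Q
      (degree_le_natDegree.trans_lt (by exact_mod_cast Nat.lt_succ_self _))
    obtain ⟨F, hF, hFb⟩ : ∃ F : ℝ[X], derivative F = Q ∧ F.eval b = u b :=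
      ⟨F0 + C (u b - F0.eval b), by simp [hF0], by simp⟩
    have hw : ∀ t ∈ Icc a b, |u t - F.eval t| ≤ ε * (b - t) := by
      intro t ht
      have := Convex.norm_image_sub_le_of_norm_hasDerivWithin_le (f := fun t => u t - F.eval t)
        (f' := fun t => v t - Q.eval t) (C := ε) (s := Icc a b)
        (fun x hx => (hu x hx).sub (by rw [← hF]; exact (F.hasDerivAt x).hasDerivWithinAt))
        (fun x hx => by rw [Real.norm_eq_abs, abs_sub_comm]; exact (hQ x hx).le)
        (convex_Icc a b) (right_mem_Icc.2 hab.le) ht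
      simp only [hFb, sub_self, sub_zero, Real.norm_eq_abs] at this
      rwa [abs_sub_comm t b, abs_of_nonneg (by linarith [ht.2] : 0 ≤ b - t)] at this
    obtain ⟨h, hd, hh⟩ := exists_proj hab r (fun t => F.eval t) (hpc F)
    have hPE := poly_est hab r F h hd hh
    set PF : ℝ[X] := C (F.eval b) + (C b - X) * h with hPF
    -- difference of projections
    obtain ⟨k, hk⟩ : ∃ k : ℝ[X], p - PF = (C b - X) * k := by
      have : (p - PF).IsRoot b := by
        simp [IsRoot, hPF, hpb, hFb]
      obtain ⟨k, hk⟩ := dvd_iff_isRoot.2 this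
      exact ⟨-k, by rw [hk]; ring⟩
    have hkd : k.degree < (r : WithBot ℕ) := by
      by_cases hk0 : k = 0
      · rw [hk0, degree_zero]; exact WithBot.bot_lt_coe r
      have h1 : (C b - X : ℝ[X]).degree = 1 := by
        rw [← neg_sub, degree_neg, degree_X_sub_C]
      have h2 : (p - PF).degree ≤ (r : WithBot ℕ) := by
        refine (degree_sub_le _ _).trans (max_le (natDegree_le_iff_degree_le.1 hp) ?_)
        refine (degree_add_le _ _).trans (max_le (degree_C_le.trans (by exact_mod_cast Nat.zero_le r)) ?_)
        rw [degree_mul, h1]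
        by_cases hh0 : h = 0
        · simp [hh0]
        rw [degree_eq_natDegree hh0] at hd ⊢
        have : h.natDegree < r := by exact_mod_cast hd
        have h3 : 1 + h.natDegree ≤ r := by omega
        exact_mod_cast h3
      rw [hk, degree_mul, h1, degree_eq_natDegree hk0] at h2
      rw [degree_eq_natDegree hk0]
      have h3 : 1 + k.natDegree ≤ r := by exact_mod_cast h2
      have h4 : k.natDegree < r := by omega
      exact_mod_cast h4
    have hkt : ∀ t, p.eval t - PF.eval t = (b - t) * k.eval t := by
      intro t
      have := congrArg (eval t) hk
      simpa using this
    have e1 := ho k hkd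
    have e2 := hh k hkd
    have e3 : ∫ t in a..b, (b - t) * k.eval t ^ 2 = ∫ t in a..b, (u t - F.eval t) * k.eval t := by
      have : ∫ t in a..b, (u t - F.eval t) * k.eval t = (∫ t in a..b, (u t - p.eval t) * k.eval t)
          - (∫ t in a..b, (F.eval t - PF.eval t) * k.eval t) + ∫ t in a..b, (b - t) * k.eval t ^ 2 := by
        rw [← intervalIntegral.integral_sub, ← intervalIntegral.integral_add]
        · congr 1; ext t
          have := hkt t
          linear_combination (k.eval t) * this
        · exact hII _ (by fun_prop)
        · exact hII _ (by fun_prop)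
        · exact hII _ (by fun_prop)
        · exact hII _ (by fun_prop)
      rw [this, e1, e2]; ring
    have e4 : ∫ t in a..b, (u t - F.eval t) * k.eval t ≤
        ∫ t in a..b, ((b - a) * (ε ^ 2 / 2) + 1 / 2 * ((b - t) * k.eval t ^ 2)) := by
      apply integral_mono_on hab.le
      · exact hII _ (by fun_prop)
      · exact hII _ (by fun_prop)
      · intro t ht
        have h1 := hw t ht
        have hbt : 0 ≤ b - t := by linarith [ht.2]
        calc (u t - F.eval t) * k.eval t ≤ |u t - F.eval t| * |k.eval t| := by
              rw [← abs_mul]; exact le_abs_self _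
          _ ≤ ε * (b - t) * |k.eval t| := by gcongr
          _ ≤ (b - t) * (ε ^ 2 / 2) + 1 / 2 * ((b - t) * |k.eval t| ^ 2) := by
              nlinarith [mul_nonneg hbt (sq_nonneg (ε - |k.eval t|))]
          _ ≤ _ := by
              rw [sq_abs]
              have : (b - t) * (ε ^ 2 / 2) ≤ (b - a) * (ε ^ 2 / 2) := by
                have := ht.1
                gcongr
              linarith
    rw [intervalIntegral.integral_add (hII _ (by fun_prop)) (hII _ (by fun_prop)),
      intervalIntegral.integral_const, smul_eq_mul, intervalIntegral.integral_const_mul (1 / 2 : ℝ)] at e4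
    have e5 : ∫ t in a..b, (b - t) * k.eval t ^ 2 ≤ (b - a) ^ 2 * ε ^ 2 := by
      rw [← e3] at e4; nlinarith
    have e6 : ∫ t in a..b, (p.eval t - PF.eval t) ^ 2 ≤ (b - a) ^ 3 * ε ^ 2 := by
      have : ∫ t in a..b, (p.eval t - PF.eval t) ^ 2 ≤ ∫ t in a..b, (b - a) * ((b - t) * k.eval t ^ 2) := by
        apply integral_mono_on hab.le
        · exact hII _ (by fun_prop)
        · exact hII _ (by fun_prop)
        · intro t ht
          rw [hkt]
          have h5 : 0 ≤ (t - a) * (b - t) * (k.eval t) ^ 2 :=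
            mul_nonneg (mul_nonneg (by linarith [ht.1]) (by linarith [ht.2])) (sq_nonneg _)
          nlinarith
      rw [intervalIntegral.integral_const_mul] at this
      nlinarith [mul_le_mul_of_nonneg_left e5 hba.le]
    have e7 : ∫ t in a..b, (u t - F.eval t) ^ 2 ≤ (b - a) ^ 3 * ε ^ 2 := by
      have : ∫ t in a..b, (u t - F.eval t) ^ 2 ≤ ∫ t in a..b, (ε * (b - a)) ^ 2 := by
        apply integral_mono_on hab.le
        · exact hII _ (by fun_prop)
        · exact hII _ (by fun_prop)
        · intro t ht
          rw [← sq_abs]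
          have h1 := hw t ht
          have h2 : ε * (b - t) ≤ ε * (b - a) := by
            have := ht.1
            gcongr
          exact pow_le_pow_left₀ (abs_nonneg _) (h1.trans h2) 2
      rw [intervalIntegral.integral_const, smul_eq_mul] at this
      linarith
    have e8 : ∫ t in a..b, (derivative F).eval t ^ 2 ≤ 2 * (∫ t in a..b, v t ^ 2) + 2 * ε ^ 2 * (b - a) := by
      have : ∫ t in a..b, (derivative F).eval t ^ 2 ≤ ∫ t in a..b, (2 * v t ^ 2 + 2 * ε ^ 2) := by
        apply integral_mono_on hab.le
        · exact hII _ (by fun_prop)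
        · exact hII _ (by fun_prop)
        · intro t ht
          rw [hF]
          have h1 := (hQ t ht).le
          have h2 : (Q.eval t - v t) ^ 2 ≤ ε ^ 2 := by
            rw [← sq_abs]; exact pow_le_pow_left₀ (abs_nonneg _) h1 2
          nlinarith [sq_nonneg (Q.eval t - 2 * v t)]
      rw [intervalIntegral.integral_add (hII _ (by fun_prop)) (hII _ (by fun_prop)),
        intervalIntegral.integral_const_mul, intervalIntegral.integral_const, smul_eq_mul] at this
      linarith
    have e9 : ∫ t in a..b, (u t - p.eval t) ^ 2 ≤ 3 * (∫ t in a..b, (u t - F.eval t) ^ 2)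
        + 3 * (∫ t in a..b, (F.eval t - PF.eval t) ^ 2) + 3 * ∫ t in a..b, (p.eval t - PF.eval t) ^ 2 := by
      rw [← intervalIntegral.integral_const_mul, ← intervalIntegral.integral_const_mul,
        ← intervalIntegral.integral_const_mul, ← intervalIntegral.integral_add, ← intervalIntegral.integral_add]
      · apply integral_mono_on hab.le
        · exact hII _ (by fun_prop)
        · exact hII _ (by fun_prop)
        · intro t ht
          generalize u t = x
          generalize eval t p = y
          generalize eval t F = z
          generalize eval t PF = w
          nlinarith [sq_nonneg ((x - z) - (z - w)), sq_nonneg ((x - z) + (y - w)), sq_nonneg ((z - w) + (y - w))]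
      · exact hII _ (by fun_prop)
      · exact hII _ (by fun_prop)
      · exact hII _ (by fun_prop)
      · exact hII _ (by fun_prop)
    have hr1 : (1 : ℝ) ≤ ((r : ℝ) + 1) ^ 2 := by
      have : (0 : ℝ) ≤ r := by positivity
      nlinarith
    have e10 : ∫ t in a..b, (F.eval t - PF.eval t) ^ 2 ≤
        2 * (b - a) ^ 2 / ((r : ℝ) + 1) ^ 2 * (∫ t in a..b, v t ^ 2) + 2 * ε ^ 2 * (b - a) ^ 3 := by
      have h1 : ∫ t in a..b, (F.eval t - PF.eval t) ^ 2 ≤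
          ((b - a) ^ 2 * (2 * (∫ t in a..b, v t ^ 2) + 2 * ε ^ 2 * (b - a))) / ((r : ℝ) + 1) ^ 2 := by
        rw [le_div_iff₀ (by positivity), mul_comm]
        refine hPE.trans ?_
        gcongr
      refine h1.trans ?_
      have h2 : (2 * ε ^ 2 * (b - a) ^ 3) / ((r : ℝ) + 1) ^ 2 ≤ 2 * ε ^ 2 * (b - a) ^ 3 :=
        div_le_self (by positivity) hr1
      calc _ = 2 * (b - a) ^ 2 / ((r : ℝ) + 1) ^ 2 * (∫ t in a..b, v t ^ 2) + (2 * ε ^ 2 * (b - a) ^ 3) / ((r : ℝ) + 1) ^ 2 := by ring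
        _ ≤ _ := by linarith
    calc _ ≤ _ := e9
      _ ≤ 3 * ((b - a) ^ 3 * ε ^ 2) + 3 * (2 * (b - a) ^ 2 / ((r : ℝ) + 1) ^ 2 * (∫ t in a..b, v t ^ 2) + 2 * ε ^ 2 * (b - a) ^ 3) + 3 * ((b - a) ^ 3 * ε ^ 2) := by linarith
      _ = _ := by ring
  apply le_of_forall_pos_le_add
  intro δ hδ
  have hK : 0 < 12 * (b - a) ^ 3 := by positivity
  have := key (Real.sqrt (δ / (12 * (b - a) ^ 3))) (Real.sqrt_pos.2 (by positivity))
  rwa [Real.sq_sqrt (by positivity), div_mul_cancel₀ _ hK.ne'] at this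

lemma high_est {a b : ℝ} (hab : a < b) (s : ℕ) : ∀ (r : ℕ) (u : ℝ → ℝ), s ≤ r →
    ContDiffOn ℝ (s + 1) u (Icc a b) → ∀ p : ℝ[X], p.natDegree ≤ r → p.eval b = u b →
    (∀ q : ℝ[X], q.degree < (r : WithBot ℕ) → ∫ t in a..b, (u t - p.eval t) * q.eval t = 0) →
    ∫ t in a..b, (u t - p.eval t) ^ 2 ≤
      (6 * (b - a) ^ 2) ^ (s + 1) / ((r + 1).descFactorial (s + 1) : ℝ) ^ 2
        * ∫ t in a..b, (iteratedDerivWithin (s + 1) u (Icc a b) t) ^ 2 := by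
  have huniq : UniqueDiffOn ℝ (Icc a b) := uniqueDiffOn_Icc hab
  induction s with
  | zero =>
    intro r u _ hu p hp hpb ho
    have hu1 : ContDiffOn ℝ 1 u (Icc a b) := by simpa using hu
    have := main_est hab r u (derivWithin u (Icc a b))
      (fun t ht => (hu1.differentiableOn one_ne_zero t ht).hasDerivWithinAt)
      (hu1.continuousOn_derivWithin huniq le_rfl) p hp hpb ho
    simpa [iteratedDerivWithin_one] using this
  | succ s ih =>
    intro r u hr hu p hp hpb ho
    obtain ⟨r, rfl⟩ : ∃ k, r = k + 1 := ⟨r - 1, by omega⟩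
    have hu1 : ContDiffOn ℝ 1 u (Icc a b) := hu.of_le (by exact_mod_cast Nat.le_add_left 1 (s + 1))
    set v := derivWithin u (Icc a b) with hv
    have hvd : ContDiffOn ℝ (s + 1) v (Icc a b) := hu.derivWithin huniq (by push_cast; rfl)
    obtain ⟨h, hd, hh⟩ := exists_proj hab r v hvd.continuousOn
    set q0 : ℝ[X] := C (v b) + (C b - X) * h with hq0
    have hq0d : q0.degree < ((r + 1 : ℕ) : WithBot ℕ) := by
      rw [degree_lt_iff_coeff_zero]
      intro m hm
      obtain ⟨m, rfl⟩ : ∃ k, m = k + 1 := ⟨m - 1, by omega⟩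
      rw [degree_lt_iff_coeff_zero] at hd
      rw [hq0, coeff_add, sub_mul, coeff_sub, coeff_C_mul, coeff_X_mul, hd m (by omega), hd (m + 1) (by omega), coeff_C]
      simp
    have h1 := ih r v (by omega) hvd q0 (by
      rw [natDegree_le_iff_coeff_eq_zero]
      rw [degree_lt_iff_coeff_zero] at hq0d
      exact fun N hN => hq0d N hN) (by simp [hq0]) hh
    obtain ⟨Q, hQ, hQd⟩ := antideriv (r + 1) q0 hq0d
    have h2 := main_est hab (r + 1) (fun t => u t - Q.eval t) (fun t => v t - q0.eval t)
      (fun t ht => (hu1.differentiableOn one_ne_zero t ht).hasDerivWithinAt.sub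
        (by rw [← hQ]; exact (Q.hasDerivAt t).hasDerivWithinAt))
      (hvd.continuousOn.sub q0.continuous.continuousOn) (p - Q)
      ((natDegree_sub_le _ _).trans (max_le hp hQd)) (by simp [hpb]) (by
        intro q hq
        rw [← ho q hq]
        congr 1; ext t
        rw [eval_sub]; ring)
    simp only [eval_sub, sub_sub_sub_cancel_right] at h2
    rw [iteratedDerivWithin_succ', ← hv, Nat.succ_descFactorial_succ]
    refine h2.trans ?_
    refine (mul_le_mul_of_nonneg_left h1 (by positivity)).trans (le_of_eq ?_)
    push_cast
    rw [pow_succ _ (s + 1), mul_pow ((r : ℝ) + 1 + 1)]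
    rw [← mul_assoc, div_mul_div_comm]
    congr 2
    ring

lemma asc_le (m s k : ℕ) : (m + s + 1).ascFactorial k ≤ (s + 1) ^ k * (m + 1).ascFactorial k := by
  induction k with
  | zero => simp
  | succ k ih =>
    rw [Nat.ascFactorial_succ, Nat.ascFactorial_succ, pow_succ]
    calc _ ≤ ((s + 1) * (m + 1 + k)) * ((s + 1) ^ k * (m + 1).ascFactorial k) := by
          apply Nat.mul_le_mul _ ih
          nlinarith
      _ = _ := by ring

lemma fact_le (r s : ℕ) (h : s ≤ r) :
    (r + s).factorial * (r - s).factorial ≤ (s + 1) ^ s * r.factorial ^ 2 := by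
  obtain ⟨m, rfl⟩ := Nat.exists_eq_add_of_le' h
  rw [Nat.add_sub_cancel, ← Nat.factorial_mul_ascFactorial (m + s) s]
  have h1 := Nat.factorial_mul_ascFactorial m s
  calc _ ≤ (m + s).factorial * ((s + 1) ^ s * (m + 1).ascFactorial s) * m.factorial := by
        gcongr; exact asc_le m s s
    _ = (m + s).factorial * (s + 1) ^ s * (m.factorial * (m + 1).ascFactorial s) := by ring
    _ = _ := by rw [h1]; ring

lemma const_le (s0 r s : ℕ) (hr : 1 ≤ r) (hs : s ≤ r) (hs0 : s ≤ s0) (d : ℝ) :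
    (6 * d ^ 2) ^ (s + 1) / ((r + 1).descFactorial (s + 1) : ℝ) ^ 2 ≤
    ((24 : ℝ) ^ (s0 + 1) * ((s0 : ℝ) + 1) ^ s0) * (d / 2) ^ (2 * (s + 1)) * (1 / (r : ℝ) ^ 2)
            * (((r - s).factorial : ℝ) / ((r + s).factorial : ℝ)) := by
  have hf : ((r + s).factorial : ℝ) * (r - s).factorial ≤ ((s : ℝ) + 1) ^ s * (r.factorial : ℝ) ^ 2 := by
    exact_mod_cast fact_le r s hs
  have hD : ((r - s).factorial : ℝ) * (r.descFactorial s : ℝ) = r.factorial := by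
    exact_mod_cast Nat.factorial_mul_descFactorial hs
  have hA : (0 : ℝ) < (r - s).factorial := by exact_mod_cast Nat.factorial_pos _
  have hB : (0 : ℝ) < (r + s).factorial := by exact_mod_cast Nat.factorial_pos _
  have hE : (0 : ℝ) < r.descFactorial s := by
    exact_mod_cast Nat.descFactorial_pos.2 hs
  have hr0 : (0 : ℝ) < r := by exact_mod_cast hr
  have hC : (24 : ℝ) ^ (s + 1) * ((s : ℝ) + 1) ^ s ≤ (24 : ℝ) ^ (s0 + 1) * ((s0 : ℝ) + 1) ^ s0 := by
    have h1 : (24 : ℝ) ^ (s + 1) ≤ (24 : ℝ) ^ (s0 + 1) := pow_le_pow_right₀ (by norm_num) (by omega)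
    have h2 : ((s : ℝ) + 1) ^ s ≤ ((s0 : ℝ) + 1) ^ s0 := by
      have : (s : ℝ) ≤ s0 := by exact_mod_cast hs0
      calc ((s : ℝ) + 1) ^ s ≤ ((s0 : ℝ) + 1) ^ s := by gcongr
        _ ≤ _ := pow_le_pow_right₀ (by linarith [(Nat.cast_nonneg s0 : (0 : ℝ) ≤ s0)]) hs0
    gcongr
  have hd : (6 * d ^ 2) ^ (s + 1) = 24 ^ (s + 1) * (d / 2) ^ (2 * (s + 1)) := by
    rw [pow_mul, ← mul_pow]; congr 1; ring
  have hdn : 0 ≤ (d / 2) ^ (2 * (s + 1)) := by rw [pow_mul]; positivity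
  rw [Nat.succ_descFactorial_succ, hd]
  push_cast
  generalize (d / 2) ^ (2 * (s + 1)) = X at *
  generalize (24 : ℝ) ^ (s0 + 1) * ((s0 : ℝ) + 1) ^ s0 = K at *
  have h1 : (1 : ℝ) / (r.descFactorial s : ℝ) ^ 2 ≤ ((s : ℝ) + 1) ^ s * (((r - s).factorial : ℝ) / (r + s).factorial) := by
    rw [← mul_div_assoc, div_le_div_iff₀ (by positivity) hB]
    rw [← hD] at hf
    refine le_of_mul_le_mul_right ?_ hA
    calc _ = ((r + s).factorial : ℝ) * (r - s).factorial := by ring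
      _ ≤ _ := hf
      _ = _ := by ring
  have h2 : (1 : ℝ) / ((r : ℝ) + 1) ^ 2 ≤ 1 / (r : ℝ) ^ 2 := by
    apply one_div_le_one_div_of_le (by positivity)
    gcongr; linarith
  calc (24 : ℝ) ^ (s + 1) * X / (((r : ℝ) + 1) * (r.descFactorial s : ℝ)) ^ 2
      = 24 ^ (s + 1) * X * (1 / ((r : ℝ) + 1) ^ 2) * (1 / (r.descFactorial s : ℝ) ^ 2) := by
        field_simp
    _ ≤ 24 ^ (s + 1) * X * (1 / (r : ℝ) ^ 2) * (((s : ℝ) + 1) ^ s * (((r - s).factorial : ℝ) / (r + s).factorial)) := by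
        gcongr
    _ = (24 ^ (s + 1) * ((s : ℝ) + 1) ^ s) * X * (1 / (r : ℝ) ^ 2) * (((r - s).factorial : ℝ) / (r + s).factorial) := by ring
    _ ≤ _ := by gcongr

end RadauProj



/-- projection error estimate, Lemma 3.1 / eq. (3.2).
For every `s₀ ∈ ℕ` there is `C > 0`, depending only on `s₀`, such that for every
interval `(a,b)` with `Δt = b − a`, every `r ≥ 1`, every `u ∈ C^{s₀+1}([a,b])` and every
integer `0 ≤ s ≤ min(r, s₀)`,
`‖u − Π^r u‖²_{L²(a,b)} ≤ C (Δt/2)^{2(s+1)} (1/r²) ((r−s)!/(r+s)!) ‖u^{(s+1)}‖²_{L²(a,b)}`.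
Here `Π^r u` is characterized as the unique polynomial `p` of degree `≤ r` with
`p b = u b` and `∫_a^b (u − p) q dt = 0` for all polynomials `q` of degree `< r`
(the transport of the reference projector on `(−1,1)` by the affine map). -/
theorem stmt_10 (s0 : ℕ) :
    ∃ C > (0 : ℝ), ∀ a b : ℝ, a < b → ∀ r : ℕ, 1 ≤ r → ∀ u : ℝ → ℝ,
      ContDiffOn ℝ (s0 + 1) u (Set.Icc a b) →
      ∀ s : ℕ, s ≤ min r s0 →
      ∀ p : Polynomial ℝ, p.natDegree ≤ r → p.eval b = u b →
        (∀ q : Polynomial ℝ, q.degree < (r : WithBot ℕ) →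
          ∫ t in a..b, (u t - p.eval t) * q.eval t = 0) →
        (∫ t in a..b, (u t - p.eval t) ^ 2)
          ≤ C * ((b - a) / 2) ^ (2 * (s + 1)) * (1 / (r : ℝ) ^ 2)
            * (((r - s).factorial : ℝ) / ((r + s).factorial : ℝ))
            * ∫ t in a..b, (iteratedDerivWithin (s + 1) u (Set.Icc a b) t) ^ 2 := by
  refine ⟨(24 : ℝ) ^ (s0 + 1) * ((s0 : ℝ) + 1) ^ s0, by positivity, ?_⟩
  intro a b hab r hr u hu s hs p hp hpb ho
  have h1 := RadauProj.high_est hab s r u (hs.trans (min_le_left _ _))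
    (hu.of_le (by
      have : s + 1 ≤ s0 + 1 := Nat.succ_le_succ (hs.trans (min_le_right _ _))
      exact_mod_cast this)) p hp hpb ho
  refine h1.trans (mul_le_mul_of_nonneg_right
    (RadauProj.const_le s0 r s hr (hs.trans (min_le_left _ _)) (hs.trans (min_le_right _ _)) (b - a)) ?_)
  exact intervalIntegral.integral_nonneg hab.le (fun t _ => sq_nonneg _)
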